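/- Let X be a Grothendieck category satisfying (AB4*) (products are exact), let Y be a localizing subcategory of X, and let π : X → X/Y be the quotient functor. If 𝒵 is a closed subcategory of X/Y, then Ẑ = (π^{-1}(𝒵))', the full subcategory of X generated by the Y-torsionfree objects M with π(M) ∈ 𝒵, is a Y-closed subcategory of X. -/

import Mathlib

open CategoryTheory CategoryTheory.Limits Opposite

universe v u

namespace Paper

variable {C : Type u} [Category.{v} C]

/-- An object `M` is compact if `Hom(M, -)` commutes with arbitrary (small) direct sums. -/
def IsCompactObj (M : C) : Prop :=
  ∀ ι : Type v, Nonempty (PreservesColimitsOfShape (Discrete ι) (coyoneda.obj (op M)))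

variable [Abelian C]

section
variable [HasColimits C]

/-- A full subcategory (given by its set of objects) is weakly closed if it is closed
under subobjects, quotient objects and arbitrary (small) direct sums. -/
structure IsWeaklyClosed (Z : Set C) : Prop where
  mem_of_mono : ∀ {A M : C} (f : A ⟶ M), Mono f → M ∈ Z → A ∈ Z
  mem_of_epi : ∀ {M B : C} (f : M ⟶ B), Epi f → M ∈ Z → B ∈ Z
  sigma_mem : ∀ {ι : Type v} (f : ι → C), (∀ i, f i ∈ Z) → (∐ f) ∈ Z

/-- Closure under arbitrary (small) products. -/
def ClosedUnderProducts [HasLimits C] (Z : Set C) : Prop :=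
  ∀ {ι : Type v} (f : ι → C), (∀ i, f i ∈ Z) → (∏ᶜ f) ∈ Z

/-- A closed subcategory: weakly closed and closed under products. -/
def IsClosedSub [HasLimits C] (Z : Set C) : Prop :=
  IsWeaklyClosed Z ∧ ClosedUnderProducts Z

/-- Closure under extensions. -/
def ClosedUnderExtensions (Y : Set C) : Prop :=
  ∀ S : ShortComplex C, S.ShortExact → S.X₁ ∈ Y → S.X₃ ∈ Y → S.X₂ ∈ Y

/-- A localizing subcategory: weakly closed and closed under extensions. -/
def IsLocalizing (Y : Set C) : Prop :=
  IsWeaklyClosed Y ∧ ClosedUnderExtensions Y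

/-- The full subcategory generated by a class of objects `G`: all quotient objects
of (small) direct sums of objects of `G`. -/
def generatedBy (G : Set C) : Set C :=
  { M | ∃ (ι : Type v) (f : ι → C), (∀ i, f i ∈ G) ∧ ∃ p : (∐ f) ⟶ M, Epi p }

end

/-- A filter of subobjects of an object: nonempty, upward closed, and closed under
finite intersections. -/
def IsFilterOn {O : C} (F : Set (Subobject O)) : Prop :=
  F.Nonempty ∧ (∀ {I J : Subobject O}, I ∈ F → I ≤ J → J ∈ F) ∧
    ∀ {I J : Subobject O}, I ∈ F → J ∈ F → I ⊓ J ∈ F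

/-- A principal filter consists of all subobjects containing a fixed one. -/
def IsPrincipalFilter {O : C} (F : Set (Subobject O)) : Prop :=
  ∃ I : Subobject O, F = { J | I ≤ J }

variable {A : Type v}

/-- A filter system in a family of objects. -/
def IsFilterSystem (O : A → C) (F : ∀ α, Set (Subobject (O α))) : Prop :=
  (∀ α, IsFilterOn (F α)) ∧
    ∀ (α β : A) (f : O α ⟶ O β), ∀ J ∈ F β, (Subobject.pullback f).obj J ∈ F α

/-- An ideal in a family of generators: a choice of subobject `I α ⊆ O α` for each `α`
such that `f (I α) ⊆ I β` for every morphism `f : O α ⟶ O β`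
(expressed as `I α ≤ f⁻¹ (I β)`). -/
def IsIdealIn (O : A → C) (I : ∀ α, Subobject (O α)) : Prop :=
  ∀ (α β : A) (f : O α ⟶ O β), I α ≤ (Subobject.pullback f).obj (I β)

/-- The quotient object `O/I` of `O` by a subobject `I`. -/
noncomputable def quotBy {O : C} (I : Subobject O) : C := cokernel I.arrow

/-- The weakly closed subcategory generated by the objects `O α / I`, `I ∈ F α`. -/
def wcOfFilterSystem [HasColimits C] (O : A → C) (F : ∀ α, Set (Subobject (O α))) : Set C :=
  generatedBy { M | ∃ (α : A) (I : Subobject (O α)), I ∈ F α ∧ Nonempty (quotBy I ≅ M) }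

/-- The filter system associated to a subcategory `Z`: `F α = {I | O α / I ∈ Z}`. -/
def filterOf (O : A → C) (Z : Set C) (α : A) : Set (Subobject (O α)) :=
  { I | quotBy I ∈ Z }

section QuotientCat

variable {D : Type u} [Category.{v} D]

/-- The image `π(Z)` of a subcategory, as a full subcategory of the target
(closed under isomorphism). -/
def imageSub (π : C ⥤ D) (Z : Set C) : Set D := { N | ∃ M ∈ Z, Nonempty (π.obj M ≅ N) }

/-- The preimage `π⁻¹(𝒵)` of a subcategory. -/
def preimageSub (π : C ⥤ D) (Z : Set D) : Set C := { M | π.obj M ∈ Z }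

/-- `M` is `Y`-torsionfree if it has no nonzero subobject belonging to `Y`. -/
def IsTorsionFree (Y : Set C) (M : C) : Prop :=
  ∀ (N : C) (f : N ⟶ M), Mono f → N ∈ Y → IsZero N

/-- `Z` is `Y`-essentially stable if `ωπ(M) ∈ Z` for all `M ∈ Z`. -/
def EssStable (π : C ⥤ D) (ω : D ⥤ C) (Z : Set C) : Prop :=
  ∀ M ∈ Z, ω.obj (π.obj M) ∈ Z

/-- `Z'`: the full subcategory generated by the `Y`-torsionfree objects of `Z`. -/
def torsPart [HasColimits C] (Y Z : Set C) : Set C :=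
  generatedBy { M | M ∈ Z ∧ IsTorsionFree Y M }

/-- `Z` is `Y`-torsionfree generated if every object of `Z` is a quotient of a direct sum
of `Y`-torsionfree objects of `Z`. -/
def TorsionfreeGenerated [HasColimits C] (Y Z : Set C) : Prop :=
  Z ⊆ torsPart Y Z

/-- `Z` is `Y`-weakly closed: weakly closed, `Y`-essentially stable
and `Y`-torsionfree generated. -/
def IsYWeaklyClosed [HasColimits C] (π : C ⥤ D) (ω : D ⥤ C) (Y Z : Set C) : Prop :=
  IsWeaklyClosed Z ∧ EssStable π ω Z ∧ TorsionfreeGenerated Y Z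

/-- `Z` is `Y`-closed: closed, `Y`-essentially stable and `Y`-torsionfree generated. -/
def IsYClosed [HasLimits C] [HasColimits C] (π : C ⥤ D) (ω : D ⥤ C) (Y Z : Set C) : Prop :=
  IsClosedSub Z ∧ EssStable π ω Z ∧ TorsionfreeGenerated Y Z

end QuotientCat

/-- The Gabriel product `Z * W`: all objects `P` fitting in a short exact sequence
`0 → M → P → N → 0` with `M ∈ W` and `N ∈ Z`. -/
def gabrielProd (Z W : Set C) : Set C :=
  { P | ∃ S : ShortComplex C, S.ShortExact ∧ S.X₁ ∈ W ∧ S.X₃ ∈ Z ∧ Nonempty (S.X₂ ≅ P) }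

/-- `Isat` is the `Y`-saturation of `I` inside `O`: the largest subobject `J ⊇ I`
with `J/I ∈ Y`; that is, `Isat/I = τ(O/I)`. -/
def IsSaturationOf (Y : Set C) {O : C} (I Isat : Subobject O) : Prop :=
  ∃ h : I ≤ Isat, cokernel (Subobject.ofLE I Isat h) ∈ Y ∧
    ∀ (J : Subobject O) (hJ : I ≤ J), cokernel (Subobject.ofLE I J hJ) ∈ Y → J ≤ Isat


/-- The subcategory generated by the objects `O α / I α` for an ideal `I`. -/
def wcOfIdeal [HasColimits C] (O : A → C) (I : ∀ α, Subobject (O α)) : Set C :=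
  generatedBy { M | ∃ α : A, Nonempty (quotBy (I α) ≅ M) }

/-- The union `Z₁ ∪ Z₂` of two weakly closed subcategories: explicitly, all
subquotients of objects `M ⊞ N` with `M ∈ Z₁` and `N ∈ Z₂`. -/
def unionWC (Z₁ Z₂ : Set C) : Set C :=
  { P | ∃ (M N Q : C) (i : Q ⟶ M ⊞ N) (p : Q ⟶ P), M ∈ Z₁ ∧ N ∈ Z₂ ∧ Mono i ∧ Epi p }

/-! Let `𝒢` be the class of `Y`-torsionfree `M` with `π(M) ∈ 𝒵`. The unit of the adjunction `π ⊣ ω`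
embeds a torsionfree object `M` into `ωπ(M)`, so `𝒢` consists precisely of the subobjects of the
objects `ω(N)` with `N ∈ 𝒵`. In this description `𝒢` is visibly closed under subobjects, and under
products because the right adjoint `ω` preserves them. By (AB5) the coproduct of a family embeds
into its product, so `𝒢` is closed under coproducts as well. Hence every object of `Ẑ` is a quotient
of a single object of `𝒢`; subobjects of such quotients are covered by pulling back the cover, and,
by (AB4*), products of such quotients are covered by the product of the covers. -/

universe w

section CoproductToProduct

variable {E : Type*} [Category* E] [HasZeroMorphisms E]

open Classical in
/-- The canonical morphism from the coproduct of a family to its product, with components the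
identities on the diagonal and zero off it; it compares the two under (AB5). -/
noncomputable def sigmaToPi {ι : Type*} (f : ι → E) [HasCoproduct f] [HasProduct f] :
    ∐ f ⟶ ∏ᶜ f :=
  Limits.Sigma.desc (Pi.ι f)

instance isIso_sigmaToPi_of_hasBiproduct {ι : Type*} (f : ι → E) [HasBiproduct f] :
    IsIso (sigmaToPi f) := by
  have : sigmaToPi f = (biproduct.isoCoproduct f).inv ≫ (biproduct.isoProduct f).hom := by
    classical
    ext i j
    by_cases h : i = j
    · subst h; simp [sigmaToPi]
    · simp [sigmaToPi, Pi.ι_π_of_ne _ h, biproduct.ι_π_ne _ h]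
  rw [this]
  infer_instance

lemma sigmaDesc_comp_sigmaToPi_comp_piLift {ι κ : Type*} (f : ι → E) [HasCoproduct f]
    [HasProduct f] {e : κ → ι} (he : e.Injective) [HasCoproduct (fun k ↦ f (e k))]
    [HasProduct (fun k ↦ f (e k))] :
    Limits.Sigma.desc (fun k ↦ Sigma.ι f (e k)) ≫ sigmaToPi f ≫ Pi.lift (fun k ↦ Pi.π f (e k)) =
      sigmaToPi (fun k ↦ f (e k)) := by
  classical
  ext k l
  by_cases h : k = l
  · subst h; simp [sigmaToPi]
  · simp [sigmaToPi, Pi.ι_π_of_ne _ h, Pi.ι_π_of_ne _ (he.ne h)]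

lemma mono_sigmaDesc_comp_sigmaToPi {ι κ : Type*} (f : ι → E) [HasCoproduct f]
    [HasProduct f] {e : κ → ι} (he : e.Injective) [HasBiproduct (fun k ↦ f (e k))] :
    Mono (Limits.Sigma.desc (fun k ↦ Sigma.ι f (e k)) ≫ sigmaToPi f) := by
  have h := sigmaDesc_comp_sigmaToPi_comp_piLift f he
  rw [← Category.assoc] at h
  exact mono_of_mono_fac h

open CoproductsFromFiniteFiltered in
lemma mono_sigmaToPi [HasFiniteBiproducts E] [HasFilteredColimitsOfSize.{w, w} E]
    [AB5OfSize.{w, w} E] {ι : Type w} (f : ι → E) [HasCoproduct f] [HasProduct f] :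
    Mono (sigmaToPi f) := by
  let φ : liftToFinsetObj (Discrete.functor f) ⟶ (Functor.const _).obj (∏ᶜ f) :=
    (finiteSubcoproductsCocone f).ι ≫ (Functor.const _).map (sigmaToPi f)
  have hφ (S : Finset (Discrete ι)) : Mono (φ.app S) :=
    mono_sigmaDesc_comp_sigmaToPi f (e := fun s : S ↦ s.1.as)
      fun _ _ h ↦ Subtype.ext (Discrete.ext h)
  have := NatTrans.mono_of_mono_app φ
  have : IsConnected (Finset (Discrete ι)) := IsFiltered.isConnected _
  exact colim.map_mono' φ (isColimitFiniteSubproductsCocone f)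
    (isColimitConstCocone (Finset (Discrete ι)) (∏ᶜ f)) (sigmaToPi f)
    fun _ ↦ (Category.comp_id _).symm

end CoproductToProduct

lemma epi_piMap {E : Type*} [Category* E] {ι : Type*} [HasLimitsOfShape (Discrete ι) E]
    [HasExactLimitsOfShape (Discrete ι) E] {f g : ι → E} (p : ∀ i, f i ⟶ g i) [∀ i, Epi (p i)] :
    Epi (Limits.Pi.map p) := by
  let φ : Discrete.functor f ⟶ Discrete.functor g := Discrete.natTrans fun i ↦ p i.as
  have (i : Discrete ι) : Epi (φ.app i) := inferInstanceAs (Epi (p i.as))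
  have := NatTrans.epi_of_epi_app φ
  exact inferInstanceAs (Epi (lim.map φ))

section GeneratedBy

variable {E : Type u} [Category.{v} E]

/-- A class of objects is closed under subobjects; together with `ClosedUnderProducts` this is the
condition on a class of generators which makes the generated subcategory closed. -/
def ClosedUnderSubobjects (Z : Set E) : Prop :=
  ∀ {A M : E} (f : A ⟶ M), Mono f → M ∈ Z → A ∈ Z

variable [HasColimits E]

/-- Closure under arbitrary (small) direct sums; it lets an object of `generatedBy G` be covered
by a single object of `G`. -/
def ClosedUnderCoproducts (Z : Set E) : Prop :=
  ∀ {ι : Type v} (f : ι → E), (∀ i, f i ∈ Z) → (∐ f) ∈ Z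

lemma ClosedUnderProducts.closedUnderCoproducts [HasZeroMorphisms E]
    [HasFiniteBiproducts E] [HasLimits E] [AB5 E] {G : Set E}
    (hprod : ClosedUnderProducts G) (hsub : ClosedUnderSubobjects G) :
    ClosedUnderCoproducts G :=
  fun f hf ↦ hsub (sigmaToPi f) (mono_sigmaToPi f) (hprod f hf)

variable {G H : Set E}

lemma generatedBy_mono (h : G ⊆ H) : generatedBy G ⊆ generatedBy H :=
  fun _ ⟨ι, f, hf, hp⟩ ↦ ⟨ι, f, fun i ↦ h (hf i), hp⟩

lemma subset_generatedBy (G : Set E) : G ⊆ generatedBy G := fun M hM ↦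
  ⟨PUnit, fun _ ↦ M, fun _ ↦ hM, Limits.Sigma.desc fun _ ↦ 𝟙 M,
    epi_of_epi_fac (Sigma.ι_desc (fun _ : PUnit ↦ 𝟙 M) PUnit.unit)⟩

lemma IsWeaklyClosed.generatedBy_subset (hH : IsWeaklyClosed H) (h : G ⊆ H) :
    generatedBy G ⊆ H :=
  fun _ ⟨_, f, hf, p, hp⟩ ↦ hH.mem_of_epi p hp (hH.sigma_mem f fun i ↦ h (hf i))

lemma mem_generatedBy_of_epi {M B : E} (f : M ⟶ B) [Epi f] (hM : M ∈ generatedBy G) :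
    B ∈ generatedBy G := by
  obtain ⟨ι, g, hg, p, hp⟩ := hM
  exact ⟨ι, g, hg, p ≫ f, epi_comp p f⟩

lemma closedUnderCoproducts_generatedBy (G : Set E) : ClosedUnderCoproducts (generatedBy G) := by
  intro ι M hM
  choose κ f hf p hp using hM
  exact ⟨Σ i, κ i, fun x ↦ f x.1 x.2, fun x ↦ hf x.1 x.2,
    (sigmaSigmaIso κ f).inv ≫ Limits.Sigma.map p, epi_comp _ _⟩

lemma ClosedUnderCoproducts.exists_epi (hG : ClosedUnderCoproducts G) {M : E}
    (hM : M ∈ generatedBy G) : ∃ T ∈ G, ∃ p : T ⟶ M, Epi p := by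
  obtain ⟨ι, f, hf, p, hp⟩ := hM
  exact ⟨∐ f, hG f hf, p, hp⟩

lemma ClosedUnderCoproducts.closedUnderSubobjects_generatedBy [Abelian E]
    (hG : ClosedUnderCoproducts G) (hsub : ClosedUnderSubobjects G) :
    ClosedUnderSubobjects (generatedBy G) := by
  intro A M f hf hM
  obtain ⟨T, hT, p, hp⟩ := hG.exists_epi hM
  have hP : pullback p f ∈ G := hsub (pullback.fst p f) inferInstance hT
  exact mem_generatedBy_of_epi (pullback.snd p f) (subset_generatedBy G hP)

lemma ClosedUnderCoproducts.closedUnderProducts_generatedBy [HasLimits E] [AB4Star E]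
    (hG : ClosedUnderCoproducts G) (hprod : ClosedUnderProducts G) :
    ClosedUnderProducts (generatedBy G) := by
  intro ι M hM
  choose T hT p hp using fun i ↦ hG.exists_epi (hM i)
  have := epi_piMap p
  exact mem_generatedBy_of_epi (Limits.Pi.map p) (subset_generatedBy G (hprod T hT))

theorem isClosedSub_generatedBy [Abelian E] [HasLimits E] [AB5 E] [AB4Star E]
    (hsub : ClosedUnderSubobjects G) (hprod : ClosedUnderProducts G) :
    IsClosedSub (generatedBy G) := by
  have := Abelian.hasFiniteBiproducts (C := E)
  have hG : ClosedUnderCoproducts G := hprod.closedUnderCoproducts hsub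
  constructor
  · exact
      { mem_of_mono := hG.closedUnderSubobjects_generatedBy hsub
        mem_of_epi := fun f _ ↦ mem_generatedBy_of_epi f
        sigma_mem := closedUnderCoproducts_generatedBy G }
  · exact hG.closedUnderProducts_generatedBy hprod

lemma torsionfreeGenerated_torsPart (Y Z : Set E) : TorsionfreeGenerated Y (torsPart Y Z) :=
  generatedBy_mono fun _ hM ↦ ⟨subset_generatedBy _ hM, hM.2⟩

end GeneratedBy

section Adjunction

variable {E E' : Type*} [Category* E] [Category* E'] {F : E ⥤ E'} {R : E' ⥤ E}

lemma mono_homEquiv_symm (adj : F ⊣ R) [F.PreservesMonomorphisms] [R.Full] [R.Faithful]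
    {M : E} {N : E'} (i : M ⟶ R.obj N) [Mono i] : Mono ((adj.homEquiv M N).symm i) := by
  rw [adj.homEquiv_counit]
  infer_instance

lemma isZero_obj_kernel_unit [HasZeroMorphisms E] [HasZeroMorphisms E'] (adj : F ⊣ R)
    [F.PreservesMonomorphisms] [R.Full] [R.Faithful] (M : E) [HasKernel (adj.unit.app M)] :
    IsZero (F.obj (kernel (adj.unit.app M))) := by
  have := adj.isLeftAdjoint
  refine IsZero.of_mono_eq_zero (F.map (kernel.ι (adj.unit.app M))) ?_
  rw [← cancel_mono (F.map (adj.unit.app M)), ← F.map_comp, kernel.condition, F.map_zero, zero_comp]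

end Adjunction

section Quotient

variable {E D : Type u} [Category.{v} E] [Category.{v} D] {π : E ⥤ D} {ω : D ⥤ E}
  {Y : Set E} {𝒵 : Set D}

lemma isTorsionFree_of_mono_obj [HasZeroMorphisms E] [HasZeroMorphisms D] (adj : π ⊣ ω)
    (hY : ∀ M ∈ Y, IsZero (π.obj M)) {M : E} {N : D} (i : M ⟶ ω.obj N) [Mono i] :
    IsTorsionFree Y M := by
  intro A f hf hA
  have hfi : f ≫ i = 0 := (adj.homEquiv A N).symm.injective ((hY A hA).eq_of_src _ _)
  exact IsZero.of_mono_eq_zero f (zero_of_comp_mono i hfi)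

lemma IsTorsionFree.mono_unit_app [Preadditive E] [HasKernels E] [HasZeroMorphisms D]
    (adj : π ⊣ ω) [π.PreservesMonomorphisms] [ω.Full] [ω.Faithful]
    (hY : ∀ M, IsZero (π.obj M) → M ∈ Y) {M : E} (hM : IsTorsionFree Y M) :
    Mono (adj.unit.app M) := by
  have hK : IsZero (kernel (adj.unit.app M)) :=
    hM _ (kernel.ι _) inferInstance (hY _ (isZero_obj_kernel_unit adj M))
  exact Preadditive.mono_of_kernel_zero (hK.eq_of_src _ _)

/-- The class of objects which embed into `ω(N)` for some `N ∈ 𝒵`. For a section functor `ω` these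
are the torsionfree objects of the preimage of `𝒵`. -/
def embeddableIn (ω : D ⥤ E) (𝒵 : Set D) : Set E :=
  { M | ∃ N ∈ 𝒵, ∃ i : M ⟶ ω.obj N, Mono i }

lemma closedUnderSubobjects_embeddableIn (ω : D ⥤ E) (𝒵 : Set D) :
    ClosedUnderSubobjects (embeddableIn ω 𝒵) :=
  fun f _ ⟨N, hN, i, _⟩ ↦ ⟨N, hN, f ≫ i, mono_comp f i⟩

lemma IsWeaklyClosed.preimageSub [HasColimits E] [HasColimits D] (adj : π ⊣ ω)
    [π.PreservesMonomorphisms] (h𝒵 : IsWeaklyClosed 𝒵) : IsWeaklyClosed (preimageSub π 𝒵) where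
  mem_of_mono f _ := h𝒵.mem_of_mono (π.map f) inferInstance
  mem_of_epi f _ :=
    have := adj.isLeftAdjoint
    h𝒵.mem_of_epi (π.map f) inferInstance
  sigma_mem f hf :=
    have := adj.leftAdjoint_preservesColimits
    h𝒵.mem_of_epi (PreservesCoproduct.iso π f).inv inferInstance (h𝒵.sigma_mem _ hf)

lemma torsionFree_preimageSub_eq_embeddableIn [Preadditive E] [HasKernels E]
    [HasZeroMorphisms D] (adj : π ⊣ ω) [π.PreservesMonomorphisms] [ω.Full] [ω.Faithful]
    (hY : ∀ M, M ∈ Y ↔ IsZero (π.obj M)) (h𝒵 : ClosedUnderSubobjects 𝒵) :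
    { M | M ∈ preimageSub π 𝒵 ∧ IsTorsionFree Y M } = embeddableIn ω 𝒵 := by
  ext M
  constructor
  · rintro ⟨hM, htf⟩
    exact ⟨π.obj M, hM, adj.unit.app M, htf.mono_unit_app adj fun A ↦ (hY A).2⟩
  · rintro ⟨N, hN, i, _⟩
    exact ⟨h𝒵 _ (mono_homEquiv_symm adj i) hN,
      isTorsionFree_of_mono_obj adj (fun A ↦ (hY A).1) i⟩

lemma essStable_torsPart_preimageSub [HasZeroMorphisms E] [HasZeroMorphisms D]
    [HasColimits E] [HasColimits D] (adj : π ⊣ ω) [π.PreservesMonomorphisms] [ω.Full] [ω.Faithful]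
    (hY : ∀ M ∈ Y, IsZero (π.obj M)) (h𝒵 : IsWeaklyClosed 𝒵) :
    EssStable π ω (torsPart Y (preimageSub π 𝒵)) := by
  intro M hM
  have hπM : π.obj M ∈ 𝒵 := (h𝒵.preimageSub adj).generatedBy_subset (fun _ hT ↦ hT.1) hM
  have hπωπM : ω.obj (π.obj M) ∈ preimageSub π 𝒵 :=
    h𝒵.mem_of_mono (adj.counit.app (π.obj M)) inferInstance hπM
  exact subset_generatedBy _ ⟨hπωπM, isTorsionFree_of_mono_obj adj hY (𝟙 _)⟩

lemma closedUnderProducts_embeddableIn [HasLimits E] [HasLimits D] [PreservesLimits ω]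
    (h𝒵 : ClosedUnderProducts 𝒵) : ClosedUnderProducts (embeddableIn ω 𝒵) := by
  intro ι M hM
  choose N hN i hi using hM
  exact ⟨∏ᶜ N, h𝒵 N hN, Limits.Pi.map i ≫ (PreservesProduct.iso ω N).inv, mono_comp _ _⟩

end Quotient

theorem statement_10_general {X : Type u} [Category.{v} X] [Abelian X]
    [HasLimits X] [HasColimits X] [AB5 X] [AB4Star X]
    {D : Type u} [Category.{v} D] [Abelian D] [HasLimits D] [HasColimits D]
    (Y : Set X) (π : X ⥤ D) (ω : D ⥤ X) (adj : π ⊣ ω) [PreservesFiniteLimits π]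
    [ω.Full] [ω.Faithful]
    (hker : ∀ M : X, M ∈ Y ↔ IsZero (π.obj M))
    (𝒵 : Set D) (h𝒵 : IsClosedSub 𝒵) :
    IsYClosed π ω Y (torsPart Y (preimageSub π 𝒵)) := by
  obtain ⟨hweak, hprod⟩ := h𝒵
  have := adj.rightAdjoint_preservesLimits
  have hclosed : IsClosedSub (torsPart Y (preimageSub π 𝒵)) := by
    rw [torsPart, torsionFree_preimageSub_eq_embeddableIn adj hker hweak.mem_of_mono]
    exact isClosedSub_generatedBy (closedUnderSubobjects_embeddableIn ω 𝒵)
      (closedUnderProducts_embeddableIn hprod)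
  exact ⟨hclosed, essStable_torsPart_preimageSub adj (fun M ↦ (hker M).1) hweak,
    torsionfreeGenerated_torsPart Y _⟩

/-- If `X` satisfies (AB4*) and `𝒵` is a closed subcategory of `X/Y`,
then `Ẑ = (π⁻¹(𝒵))'` is a `Y`-closed subcategory of `X`. -/
theorem statement_10 {X : Type u} [Category.{v} X] [Abelian X]
    [HasLimits X] [HasColimits X] [HasFilteredColimits X] [AB5 X]
    [HasProducts X] [AB4Star X]
    (hgen : ∃ G : X, IsSeparator G)
    {D : Type u} [Category.{v} D] [Abelian D] [HasLimits D] [HasColimits D]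
    (Y : Set X) (hYloc : IsLocalizing Y)
    (π : X ⥤ D) (ω : D ⥤ X) (adj : π ⊣ ω) [PreservesFiniteLimits π]
    [ω.Full] [ω.Faithful]
    (hker : ∀ M : X, M ∈ Y ↔ IsZero (π.obj M))
    (𝒵 : Set D) (h𝒵 : IsClosedSub 𝒵) :
    IsYClosed π ω Y (torsPart Y (preimageSub π 𝒵)) :=
  statement_10_general Y π ω adj hker 𝒵 h𝒵

end Paper
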